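/- Let 0 < λ < 1 and let ρ be a zero of L(λ,λ,·) with Re ρ = 1/2. Then L(1−λ,1−λ,ρ) = 0. -/

import Mathlib

/-!
Poisson summation for the theta series `∑ e(nλ) (n + α)^k exp (-π (n + α)² t)`, `k = 0, 1`, shows
that `t ↦ 1 / t` exchanges the parameters `(λ, α)` and `(-α, λ)`. Its Mellin transform is Lerch's
functional equation, which expresses `L(λ, α, 1 - s)` as a combination of `L(-α, λ, s)` and
`L(α, 1 - λ, s)`. Now take `s` to be the complex conjugate of `ρ`. Up to complex conjugation, the
two terms on the right become `L(α, λ, ρ)` and `L(1 - α, 1 - λ, ρ)`, and the latter enters with a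
nonvanishing coefficient. When `α = λ` and `Re ρ = 1 / 2`, we have `1 - s = ρ`, and the two values
other than `L(1 - λ, 1 - λ, ρ)` coincide with `L(λ, λ, ρ)`, again up to conjugation.
-/

/-- The Dirichlet series of the Lerch zeta-function, convergent for `1 < re s`. -/
noncomputable def lerchSeries (lam alp : ℝ) (s : ℂ) : ℂ :=
  ∑' m : ℕ, Complex.exp (2 * Real.pi * Complex.I * lam * m) / ((m : ℂ) + alp) ^ s

/-- `F` is the analytic continuation of the Lerch zeta-function with parameters `lam`, `alp`:
it is complex differentiable away from `1` and agrees with the Dirichlet series on `1 < re s`. -/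
def IsLerch (lam alp : ℝ) (F : ℂ → ℂ) : Prop :=
  (∀ s : ℂ, s ≠ 1 → DifferentiableAt ℂ F s) ∧
  ∀ s : ℂ, 1 < s.re → F s = lerchSeries lam alp s

open scoped Classical

/-- The multiplicity (order of vanishing) of `F` at `z` (junk value `0` if `F` is not
analytic at `z` or vanishes to infinite order). -/
noncomputable def zeroOrder (F : ℂ → ℂ) (z : ℂ) : ℕ :=
  if h : AnalyticAt ℂ F z then (analyticOrderAt F z).toNat else 0

open Complex Real Set Filter Topology Asymptotics ComplexConjugate

/-- The twisted theta series `∑ e(n lam) (n + alp) ^ k exp (-π (n + alp)² t)` over all integers `n`.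
The cases `k = 0` and `k = 1` are the even and odd kernels whose Mellin transforms give the Lerch
zeta-function. -/
noncomputable def lerchKernel (k : ℕ) (lam alp t : ℝ) : ℂ :=
  ∑' n : ℤ, cexp (2 * π * I * lam * n) * ((n + alp : ℝ) : ℂ) ^ k * rexp (-π * (n + alp) ^ 2 * t)

section Kernel

variable (k : ℕ) (lam alp : ℝ)

lemma norm_exp_two_pi_mul_I_mul_int (n : ℤ) : ‖cexp (2 * π * I * lam * n)‖ = 1 := by
  rw [show (2 * π * I * lam * n : ℂ) = ((2 * π * lam * n : ℝ) : ℂ) * I by push_cast; ring]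
  exact norm_exp_ofReal_mul_I _

lemma norm_lerchKernel_term (t : ℝ) (n : ℤ) :
    ‖cexp (2 * π * I * lam * n) * ((n + alp : ℝ) : ℂ) ^ k * rexp (-π * (n + alp) ^ 2 * t)‖ =
      HurwitzKernelBounds.f_int k alp t n := by
  rw [norm_mul, norm_mul, norm_exp_two_pi_mul_I_mul_int, norm_pow, norm_real, norm_real,
    Real.norm_of_nonneg (Real.exp_pos _).le, one_mul, Real.norm_eq_abs,
    HurwitzKernelBounds.f_int]

lemma hasSum_lerchKernel {t : ℝ} (ht : 0 < t) :
    HasSum (fun n : ℤ ↦ cexp (2 * π * I * lam * n) * ((n + alp : ℝ) : ℂ) ^ k *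
      rexp (-π * (n + alp) ^ 2 * t)) (lerchKernel k lam alp t) :=
  (Summable.of_norm <| (HurwitzKernelBounds.summable_f_int k alp ht).congr fun n ↦
    (norm_lerchKernel_term k lam alp t n).symm).hasSum

lemma norm_lerchKernel_le {t : ℝ} (ht : 0 < t) :
    ‖lerchKernel k lam alp t‖ ≤ HurwitzKernelBounds.F_int k alp t :=
  tsum_of_norm_bounded (HurwitzKernelBounds.summable_f_int k alp ht).hasSum fun n ↦
    (norm_lerchKernel_term k lam alp t n).le

lemma lerchKernel_add_one_left (t : ℝ) :
    lerchKernel k (lam + 1) alp t = lerchKernel k lam alp t := by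
  refine tsum_congr fun n ↦ ?_
  rw [show (2 * π * I * (lam + 1 : ℝ) * n : ℂ) = 2 * π * I * lam * n + n * (2 * π * I) by
    push_cast; ring, Complex.exp_add, Complex.exp_int_mul_two_pi_mul_I, mul_one]

lemma lerchKernel_neg_left (t : ℝ) :
    lerchKernel k (-lam) alp t = conj (lerchKernel k lam alp t) := by
  rw [lerchKernel, lerchKernel, conj_tsum]
  refine tsum_congr fun n ↦ ?_
  simp [← Complex.exp_conj, map_ofNat]

lemma lerchKernel_one_sub_right (t : ℝ) :
    lerchKernel k lam (1 - alp) t =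
      (-1) ^ k * cexp (-2 * π * I * lam) * lerchKernel k (-lam) alp t := by
  rw [lerchKernel, lerchKernel, ← tsum_mul_left,
    ← ((Equiv.neg ℤ).trans (Equiv.subRight 1)).tsum_eq]
  refine tsum_congr fun n ↦ ?_
  simp only [Equiv.trans_apply, Equiv.neg_apply, Equiv.subRight_apply]
  have h_abs : ((-n - 1 : ℤ) + (1 - alp) : ℝ) = -(n + alp) := by push_cast; ring
  have h_exp : cexp (2 * π * I * lam * (-n - 1 : ℤ)) =
      cexp (-2 * π * I * lam) * cexp (2 * π * I * (-lam : ℝ) * n) := by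
    rw [← Complex.exp_add]
    congr 1
    push_cast
    ring
  rw [h_abs, h_exp, ofReal_neg (n + alp), neg_pow ((n + alp : ℝ) : ℂ), neg_sq]
  ring

end Kernel

section Modularity

variable (lam alp : ℝ)

lemma lerchKernel_term_eq_jacobiTheta₂_term (t : ℝ) (n : ℤ) :
    cexp (2 * π * I * lam * n) * rexp (-π * (n + alp) ^ 2 * t) =
      cexp (-π * alp ^ 2 * t) * jacobiTheta₂_term n (lam + I * alp * t) (I * t) := by
  rw [jacobiTheta₂_term, ofReal_exp, ← Complex.exp_add, ← Complex.exp_add]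
  congr 1
  push_cast
  linear_combination (-2 * π * alp * n * t - π * n ^ 2 * t : ℂ) * I_sq

lemma im_I_mul_ofReal_pos {t : ℝ} (ht : 0 < t) : 0 < (I * t).im := by
  rwa [I_mul_im, ofReal_re]

lemma lerchKernel_zero_eq_jacobiTheta₂ (t : ℝ) :
    lerchKernel 0 lam alp t =
      cexp (-π * alp ^ 2 * t) * jacobiTheta₂ (lam + I * alp * t) (I * t) := by
  simp_rw [lerchKernel, pow_zero, mul_one, lerchKernel_term_eq_jacobiTheta₂_term, tsum_mul_left,
    jacobiTheta₂]

lemma lerchKernel_one_eq_jacobiTheta₂' {t : ℝ} (ht : 0 < t) :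
    lerchKernel 1 lam alp t =
      cexp (-π * alp ^ 2 * t) * (jacobiTheta₂' (lam + I * alp * t) (I * t) / (2 * π * I)
        + alp * jacobiTheta₂ (lam + I * alp * t) (I * t)) := by
  have h_theta := hasSum_jacobiTheta₂_term (lam + I * alp * t) (im_I_mul_ofReal_pos ht)
  have h_theta' := hasSum_jacobiTheta₂'_term (lam + I * alp * t) (im_I_mul_ofReal_pos ht)
  refine (hasSum_lerchKernel 1 lam alp ht).unique <|
    (((h_theta'.div_const (2 * π * I)).add (h_theta.mul_left ↑alp)).mul_left
      (cexp (-π * alp ^ 2 * t))).congr_fun fun n ↦ ?_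
  have hpi : (π : ℂ) ≠ 0 := ofReal_ne_zero.mpr pi_ne_zero
  rw [jacobiTheta₂'_term, pow_one, mul_right_comm, lerchKernel_term_eq_jacobiTheta₂_term]
  push_cast
  field_simp

lemma continuousOn_lerchKernel {k : ℕ} (hk : k < 2) :
    ContinuousOn (lerchKernel k lam alp) (Ioi 0) := by
  have h_theta : ContinuousOn (fun t : ℝ ↦ jacobiTheta₂ (lam + I * alp * t) (I * t)) (Ioi 0) :=
    fun x hx ↦ (ContinuousAt.comp (f := fun t : ℝ ↦ ((lam + I * alp * t : ℂ), (I * t : ℂ)))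
      (continuousAt_jacobiTheta₂ (lam + I * alp * x) (im_I_mul_ofReal_pos hx))
      (by fun_prop)).continuousWithinAt
  have h_theta' : ContinuousOn (fun t : ℝ ↦ jacobiTheta₂' (lam + I * alp * t) (I * t)) (Ioi 0) :=
    fun x hx ↦ (ContinuousAt.comp (f := fun t : ℝ ↦ ((lam + I * alp * t : ℂ), (I * t : ℂ)))
      (continuousAt_jacobiTheta₂' (lam + I * alp * x) (im_I_mul_ofReal_pos hx))
      (by fun_prop)).continuousWithinAt
  interval_cases k
  · refine ContinuousOn.congr ?_ fun t _ ↦ lerchKernel_zero_eq_jacobiTheta₂ lam alp t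
    fun_prop
  · refine ContinuousOn.congr ?_ fun t ht ↦ lerchKernel_one_eq_jacobiTheta₂' lam alp ht
    fun_prop

variable {alp} in
lemma isBigO_lerchKernel_atTop {k : ℕ} (hk : k < 2) (halp : (alp : UnitAddCircle) ≠ 0) (r : ℝ) :
    lerchKernel k lam alp =O[atTop] (· ^ r) := by
  have h_le : lerchKernel k lam alp =O[atTop] HurwitzKernelBounds.F_int k alp :=
    .of_bound' <| (eventually_gt_atTop 0).mono fun t ht ↦
      (norm_lerchKernel_le k lam alp ht).trans (le_abs_self _)
  obtain ⟨p, hp, h_exp⟩ : ∃ p, 0 < p ∧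
      HurwitzKernelBounds.F_int k alp =O[atTop] fun t ↦ rexp (-p * t) := by
    interval_cases k
    · simpa [halp] using HurwitzKernelBounds.isBigO_atTop_F_int_zero_sub alp
    · exact HurwitzKernelBounds.isBigO_atTop_F_int_one alp
  exact (h_le.trans h_exp).trans (isLittleO_exp_neg_mul_rpow_atTop hp r).isBigO

lemma jacobiTheta₂_prefactor {x : ℝ} (hx : 0 < x) :
    1 / (-I * (I * (1 / x : ℝ))) ^ (1 / 2 : ℂ) = ((x ^ (1 / 2 : ℝ) : ℝ) : ℂ) := by
  have h_base : -I * (I * (1 / x : ℝ)) = ((1 / x : ℝ) : ℂ) := by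
    linear_combination (-((1 / x : ℝ) : ℂ)) * I_sq
  rw [h_base, show (1 / 2 : ℂ) = ((1 / 2 : ℝ) : ℂ) by push_cast; rfl,
    ← ofReal_cpow (by positivity), one_div x, Real.inv_rpow hx.le]
  simp

lemma jacobiTheta₂_exp_factor {x : ℝ} (hx : 0 < x) :
    cexp (-π * alp ^ 2 * (1 / x : ℝ)) *
        cexp (-π * I * (lam + I * alp * (1 / x : ℝ)) ^ 2 / (I * (1 / x : ℝ))) =
      cexp (-2 * π * I * lam * alp) * cexp (-π * lam ^ 2 * x) := by
  have hx' : (x : ℂ) ≠ 0 := ofReal_ne_zero.mpr hx.ne'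
  rw [← Complex.exp_add, ← Complex.exp_add]
  congr 1
  push_cast
  field_simp
  linear_combination (-(alp : ℂ) ^ 2) * I_sq

lemma jacobiTheta₂_fst_inversion {x : ℝ} (hx : 0 < x) :
    (lam + I * alp * (1 / x : ℝ)) / (I * (1 / x : ℝ)) = -((-alp : ℝ) + I * lam * x : ℂ) := by
  have hx' : (x : ℂ) ≠ 0 := ofReal_ne_zero.mpr hx.ne'
  push_cast
  field_simp
  linear_combination ((lam : ℂ) * x) * I_sq

lemma neg_one_div_I_mul_one_div (x : ℝ) : -1 / (I * (1 / x : ℝ)) = I * x := by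
  push_cast
  rw [mul_one_div, div_div_eq_mul_div, div_I]
  ring

lemma lerchKernel_zero_one_div {x : ℝ} (hx : 0 < x) :
    lerchKernel 0 lam alp (1 / x) =
      cexp (-2 * π * I * lam * alp) * (x ^ (1 / 2 : ℝ) : ℝ) * lerchKernel 0 (-alp) lam x := by
  rw [lerchKernel_zero_eq_jacobiTheta₂, lerchKernel_zero_eq_jacobiTheta₂,
    jacobiTheta₂_functional_equation, jacobiTheta₂_prefactor hx,
    jacobiTheta₂_fst_inversion lam alp hx, neg_one_div_I_mul_one_div, jacobiTheta₂_neg_left]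
  linear_combination ((x ^ (1 / 2 : ℝ) : ℝ) *
    jacobiTheta₂ ((-alp : ℝ) + I * lam * x) (I * x)) * jacobiTheta₂_exp_factor lam alp hx

lemma lerchKernel_one_one_div {x : ℝ} (hx : 0 < x) :
    lerchKernel 1 lam alp (1 / x) =
      I * cexp (-2 * π * I * lam * alp) * (x ^ (3 / 2 : ℝ) : ℝ) * lerchKernel 1 (-alp) lam x := by
  have hx' : (x : ℂ) ≠ 0 := ofReal_ne_zero.mpr hx.ne'
  have hpi : (π : ℂ) ≠ 0 := ofReal_ne_zero.mpr pi_ne_zero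
  have h_rpow : x ^ (3 / 2 : ℝ) = x * x ^ (1 / 2 : ℝ) := by
    rw [← Real.rpow_one_add' hx.le (by norm_num)]
    norm_num
  rw [lerchKernel_one_eq_jacobiTheta₂' _ _ (one_div_pos.mpr hx),
    lerchKernel_one_eq_jacobiTheta₂' _ _ hx,
    jacobiTheta₂_functional_equation (lam + I * alp * (1 / x : ℝ)),
    jacobiTheta₂'_functional_equation (lam + I * alp * (1 / x : ℝ)), jacobiTheta₂_prefactor hx,
    jacobiTheta₂_fst_inversion lam alp hx, neg_one_div_I_mul_one_div, jacobiTheta₂_neg_left,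
    jacobiTheta₂'_neg_left, h_rpow]
  have h_exp := jacobiTheta₂_exp_factor lam alp hx
  set E := cexp (-π * I * (lam + I * alp * (1 / x : ℝ)) ^ 2 / (I * (1 / x : ℝ)))
  set U := jacobiTheta₂ ((-alp : ℝ) + I * lam * x) (I * x)
  set V := jacobiTheta₂' ((-alp : ℝ) + I * lam * x) (I * x)
  calc
    _ = (cexp (-π * alp ^ 2 * (1 / x : ℝ)) * E) *
        (I * x * (x ^ (1 / 2 : ℝ) : ℝ) * (V / (2 * π * I) + lam * U)) := by
      push_cast
      field_simp
      ring_nf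
      simp only [I_sq, I_pow_three]
      ring
    _ = _ := by rw [h_exp]; push_cast; ring

lemma lerchKernel_one_div {k : ℕ} (hk : k < 2) {x : ℝ} (hx : 0 < x) :
    lerchKernel k lam alp (1 / x) =
      I ^ k * cexp (-2 * π * I * lam * alp) * (x ^ (k + 1 / 2 : ℝ) : ℝ) *
        lerchKernel k (-alp) lam x := by
  interval_cases k
  · simpa using lerchKernel_zero_one_div lam alp hx
  · rw [pow_one, show ((1 : ℕ) + 1 / 2 : ℝ) = 3 / 2 by norm_num]
    exact lerchKernel_one_one_div lam alp hx

end Modularity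

section Mellin

variable {k : ℕ} {lam alp : ℝ}

/-- The modularity relation between `lerchKernel k lam alp` and `lerchKernel k (-alp) lam`, in the
form required by Mathlib's Mellin-transform argument for functional equations. -/
noncomputable def lerchFEPair (hk : k < 2) (hlam : (lam : UnitAddCircle) ≠ 0)
    (halp : (alp : UnitAddCircle) ≠ 0) : WeakFEPair ℂ where
  f := lerchKernel k lam alp
  g := lerchKernel k (-alp) lam
  k := k + 1 / 2
  ε := I ^ k * cexp (-2 * π * I * lam * alp)
  f₀ := 0
  g₀ := 0
  hf_int := (continuousOn_lerchKernel lam alp hk).locallyIntegrableOn measurableSet_Ioi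
  hg_int := (continuousOn_lerchKernel (-alp) lam hk).locallyIntegrableOn measurableSet_Ioi
  hk := by positivity
  hε := mul_ne_zero (pow_ne_zero k I_ne_zero) (Complex.exp_ne_zero _)
  h_feq _ hx := lerchKernel_one_div lam alp hk hx
  hf_top r := by simpa using isBigO_lerchKernel_atTop lam hk halp r
  hg_top r := by simpa using isBigO_lerchKernel_atTop (-alp) hk hlam r

lemma isStrongFEPair_lerchFEPair (hk : k < 2) (hlam : (lam : UnitAddCircle) ≠ 0)
    (halp : (alp : UnitAddCircle) ≠ 0) : IsStrongFEPair (lerchFEPair hk hlam halp) :=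
  ⟨rfl, rfl⟩

lemma differentiable_mellin_lerchKernel (hk : k < 2) (hlam : (lam : UnitAddCircle) ≠ 0)
    (halp : (alp : UnitAddCircle) ≠ 0) : Differentiable ℂ (mellin (lerchKernel k lam alp)) :=
  (isStrongFEPair_lerchFEPair hk hlam halp).Λ_eq ▸
    (isStrongFEPair_lerchFEPair hk hlam halp).differentiable_Λ

lemma mellin_lerchKernel_sub (hk : k < 2) (hlam : (lam : UnitAddCircle) ≠ 0)
    (halp : (alp : UnitAddCircle) ≠ 0) (s : ℂ) :
    mellin (lerchKernel k lam alp) (k + 1 / 2 - s) =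
      I ^ k * cexp (-2 * π * I * lam * alp) * mellin (lerchKernel k (-alp) lam) s := by
  have h_fe := (lerchFEPair hk hlam halp).functional_equation s
  rw [(isStrongFEPair_lerchFEPair hk hlam halp).Λ_eq,
    (isStrongFEPair_lerchFEPair hk hlam halp).symm_Λ_eq] at h_fe
  simpa [lerchFEPair] using h_fe

lemma mellin_conj (f : ℝ → ℂ) (s : ℂ) :
    mellin (fun x ↦ conj (f x)) (conj s) = conj (mellin f s) := by
  rw [mellin, mellin, ← integral_conj]
  refine MeasureTheory.setIntegral_congr_fun measurableSet_Ioi fun t (ht : 0 < t) ↦ ?_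
  have h_cpow := cpow_conj (t : ℂ) (s - 1)
    (by rw [arg_ofReal_of_nonneg ht.le]; exact pi_pos.ne)
  rw [map_sub, map_one, conj_ofReal] at h_cpow
  rw [smul_eq_mul, smul_eq_mul, map_mul, h_cpow]

lemma Gammaℝ_conj (s : ℂ) : Gammaℝ (conj s) = conj (Gammaℝ s) := by
  have h_cpow := cpow_conj (π : ℂ) (-s / 2)
    (by rw [arg_ofReal_of_nonneg pi_pos.le]; exact pi_pos.ne)
  simp only [map_div₀, map_neg, map_ofNat, conj_ofReal] at h_cpow
  rw [Gammaℝ_def, Gammaℝ_def, map_mul, ← Complex.Gamma_conj, map_div₀, map_ofNat, h_cpow]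

lemma int_add_ne_zero (halp : (alp : UnitAddCircle) ≠ 0) (n : ℤ) : (n + alp : ℝ) ≠ 0 := by
  contrapose! halp
  rw [AddCircle.coe_eq_zero_iff]
  exact ⟨-n, by simp; linarith⟩

lemma hasSum_mellin_lerchKernel (hk : k < 2) (halp : (alp : UnitAddCircle) ≠ 0) {s : ℂ}
    (hs : 1 < s.re) :
    HasSum (fun n : ℤ ↦ Gammaℝ (s + k) * cexp (2 * π * I * lam * n) *
        (SignType.sign (n + alp : ℝ) : ℂ) ^ k / (|n + alp| : ℝ) ^ s)
      (mellin (lerchKernel k lam alp) ((s + k) / 2)) := by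
  have hs0 : 0 < s.re := by linarith
  have h_summable : Summable fun n : ℤ ↦ ‖cexp (2 * π * I * lam * n)‖ / |n + alp| ^ s.re := by
    simp_rw [norm_exp_two_pi_mul_I_mul_int]
    rwa [summable_one_div_int_add_rpow]
  interval_cases k
  · simpa using hasSum_mellin_pi_mul_sq hs0
      (fun t ht ↦ by
        simpa [int_add_ne_zero halp] using hasSum_lerchKernel 0 lam alp (t := t) ht) h_summable
  · simpa using hasSum_mellin_pi_mul_sq' hs0
      (fun t ht ↦ by simpa using hasSum_lerchKernel 1 lam alp (t := t) ht) h_summable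

end Mellin

/-- The entire continuation of the bilateral series `∑ e(n lam) sign (n + alp) ^ k / |n + alp| ^ s`
over all integers `n`, for `k = 0` or `k = 1` and `lam`, `alp` not integers. -/
noncomputable def bilateralLerch (k : ℕ) (lam alp : ℝ) (s : ℂ) : ℂ :=
  (Gammaℝ (s + k))⁻¹ * mellin (lerchKernel k lam alp) ((s + k) / 2)

section Bilateral

variable {k : ℕ} {lam alp : ℝ}

lemma differentiable_bilateralLerch (hk : k < 2) (hlam : (lam : UnitAddCircle) ≠ 0)
    (halp : (alp : UnitAddCircle) ≠ 0) : Differentiable ℂ (bilateralLerch k lam alp) :=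
  (differentiable_Gammaℝ_inv.comp (f := fun s : ℂ ↦ s + k) (by fun_prop)).mul
    ((differentiable_mellin_lerchKernel hk hlam halp).comp (by fun_prop))

lemma hasSum_bilateralLerch (hk : k < 2) (halp : (alp : UnitAddCircle) ≠ 0) {s : ℂ}
    (hs : 1 < s.re) :
    HasSum (fun n : ℤ ↦ cexp (2 * π * I * lam * n) *
        (SignType.sign (n + alp : ℝ) : ℂ) ^ k / (|n + alp| : ℝ) ^ s)
      (bilateralLerch k lam alp s) := by
  have h_Gamma : Gammaℝ (s + k) ≠ 0 :=
    Gammaℝ_ne_zero_of_re_pos (by rw [add_re, natCast_re]; positivity)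
  refine ((hasSum_mellin_lerchKernel hk halp hs).mul_left _).congr_fun fun n ↦ ?_
  field_simp

lemma bilateralLerch_add_one_left (s : ℂ) :
    bilateralLerch k (lam + 1) alp s = bilateralLerch k lam alp s := by
  simp_rw [bilateralLerch, funext (lerchKernel_add_one_left k lam alp)]

lemma bilateralLerch_neg_left_conj (s : ℂ) :
    bilateralLerch k (-lam) alp (conj s) = conj (bilateralLerch k lam alp s) := by
  simp [bilateralLerch, funext (lerchKernel_neg_left k lam alp), ← Gammaℝ_conj, ← mellin_conj,
    map_ofNat]

lemma bilateralLerch_one_sub_right (s : ℂ) :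
    bilateralLerch k lam (1 - alp) s =
      (-1) ^ k * cexp (-2 * π * I * lam) * bilateralLerch k (-lam) alp s := by
  simp_rw [bilateralLerch, funext (lerchKernel_one_sub_right k lam alp), ← smul_eq_mul (_ * _),
    mellin_const_smul, smul_eq_mul]
  ring

lemma bilateralLerch_zero_one_sub (hlam : (lam : UnitAddCircle) ≠ 0)
    (halp : (alp : UnitAddCircle) ≠ 0) {s : ℂ} (hs : ∀ n : ℕ, s ≠ -n) :
    bilateralLerch 0 lam alp (1 - s) =
      cexp (-2 * π * I * lam * alp) * Gammaℂ s * cos (π * s / 2) *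
        bilateralLerch 0 (-alp) lam s := by
  have h_mellin := mellin_lerchKernel_sub two_pos hlam halp (s / 2)
  rw [bilateralLerch, bilateralLerch, Nat.cast_zero, add_zero, add_zero, inv_Gammaℝ_one_sub hs,
    show (1 - s) / 2 = (0 : ℕ) + 1 / 2 - s / 2 by push_cast; ring, h_mellin]
  ring

lemma bilateralLerch_one_one_sub (hlam : (lam : UnitAddCircle) ≠ 0)
    (halp : (alp : UnitAddCircle) ≠ 0) {s : ℂ} (hs : ∀ n : ℕ, s ≠ -n) :
    bilateralLerch 1 lam alp (1 - s) =
      I * cexp (-2 * π * I * lam * alp) * Gammaℂ s * sin (π * s / 2) *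
        bilateralLerch 1 (-alp) lam s := by
  have h_mellin := mellin_lerchKernel_sub one_lt_two hlam halp ((s + 1) / 2)
  rw [bilateralLerch, bilateralLerch, Nat.cast_one, show 1 - s + 1 = 2 - s by ring,
    inv_Gammaℝ_two_sub hs, show (2 - s) / 2 = (1 : ℕ) + 1 / 2 - (s + 1) / 2 by push_cast; ring,
    h_mellin]
  ring

end Bilateral

lemma Gammaℂ_ne_zero {s : ℂ} (hs : ∀ n : ℕ, s ≠ -n) : Gammaℂ s ≠ 0 := by
  rw [Gammaℂ_def]
  have := Complex.Gamma_ne_zero hs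
  simp [cpow_eq_zero_iff, pi_ne_zero, this]

/-- The Lerch zeta-function, as the half-sum of its even and odd bilateral continuations; this
represents it for `0 < alp < 1` and `lam` not an integer. -/
noncomputable def lerchZeta (lam alp : ℝ) (s : ℂ) : ℂ :=
  (bilateralLerch 0 lam alp s + bilateralLerch 1 lam alp s) / 2

section LerchZeta

variable {lam alp : ℝ}

lemma differentiable_lerchZeta (hlam : (lam : UnitAddCircle) ≠ 0)
    (halp : (alp : UnitAddCircle) ≠ 0) : Differentiable ℂ (lerchZeta lam alp) :=
  ((differentiable_bilateralLerch two_pos hlam halp).add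
    (differentiable_bilateralLerch one_lt_two hlam halp)).div_const 2

lemma coe_unitAddCircle_ne_zero {x : ℝ} (hx : x ∈ Ioo 0 1) : (x : UnitAddCircle) ≠ 0 := by
  rw [Ne, AddCircle.coe_eq_zero_iff_of_mem_Ico (Ioo_subset_Ico_self hx)]
  exact hx.1.ne'

lemma lerchZeta_eq_lerchSeries (halp : alp ∈ Ioo 0 1) {s : ℂ} (hs : 1 < s.re) :
    lerchZeta lam alp s = lerchSeries lam alp s := by
  have halp' := coe_unitAddCircle_ne_zero halp
  have h_sum := ((hasSum_bilateralLerch (lam := lam) two_pos halp' hs).add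
    (hasSum_bilateralLerch (lam := lam) one_lt_two halp' hs)).div_const 2
  rw [← (Nat.cast_injective (R := ℤ)).hasSum_iff] at h_sum
  · refine h_sum.tsum_eq.symm.trans (tsum_congr fun m ↦ ?_)
    have h_pos : 0 < (m + alp : ℝ) := add_pos_of_nonneg_of_pos m.cast_nonneg halp.1
    simp [sign_pos h_pos, abs_of_pos h_pos]
  · intro n hn
    have h_neg : (n + alp : ℝ) < 0 := by
      have hn_le : n ≤ -1 := by
        by_contra! h
        exact hn ⟨n.toNat, Int.toNat_of_nonneg (by lia)⟩
      have : (n : ℝ) ≤ -1 := mod_cast hn_le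
      linarith [halp.2]
    simp [sign_neg h_neg, neg_div]

theorem isLerch_lerchZeta (hlam : (lam : UnitAddCircle) ≠ 0) (halp : alp ∈ Ioo 0 1) :
    IsLerch lam alp (lerchZeta lam alp) :=
  ⟨fun s _ ↦ differentiable_lerchZeta hlam (coe_unitAddCircle_ne_zero halp) s,
    fun _ hs ↦ lerchZeta_eq_lerchSeries halp hs⟩

theorem IsLerch.eqOn {F G : ℂ → ℂ} (hF : IsLerch lam alp F) (hG : IsLerch lam alp G) :
    EqOn F G {1}ᶜ := by
  have h_analytic {H : ℂ → ℂ} (hH : IsLerch lam alp H) : AnalyticOnNhd ℂ H {1}ᶜ :=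
    DifferentiableOn.analyticOnNhd (fun s hs ↦ (hH.1 s hs).differentiableWithinAt)
      isOpen_compl_singleton
  have h_connected : IsPreconnected ({1}ᶜ : Set ℂ) :=
    (isConnected_compl_singleton_of_one_lt_rank (by simp [rank_real_complex]) 1).isPreconnected
  refine (h_analytic hF).eqOn_of_preconnected_of_eventuallyEq (h_analytic hG) h_connected
    (z₀ := 2) (by simp) ?_
  have h_nhds : {s : ℂ | 1 < s.re} ∈ 𝓝 (2 : ℂ) :=
    (isOpen_lt continuous_const continuous_re).mem_nhds (by simp)
  filter_upwards [h_nhds] with s hs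
  rw [hF.2 s hs, hG.2 s hs]

lemma lerchZeta_add_one_left (s : ℂ) : lerchZeta (lam + 1) alp s = lerchZeta lam alp s := by
  simp_rw [lerchZeta, bilateralLerch_add_one_left]

lemma lerchZeta_neg_left_conj (s : ℂ) :
    lerchZeta (-lam) alp (conj s) = conj (lerchZeta lam alp s) := by
  simp [lerchZeta, bilateralLerch_neg_left_conj, map_ofNat]

lemma lerchZeta_one_sub_right (s : ℂ) :
    lerchZeta lam (1 - alp) s = cexp (-2 * π * I * lam) *
      ((bilateralLerch 0 (-lam) alp s - bilateralLerch 1 (-lam) alp s) / 2) := by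
  rw [lerchZeta, bilateralLerch_one_sub_right, bilateralLerch_one_sub_right]
  ring

theorem lerchZeta_one_sub (hlam : (lam : UnitAddCircle) ≠ 0) (halp : (alp : UnitAddCircle) ≠ 0)
    {s : ℂ} (hs : ∀ n : ℕ, s ≠ -n) :
    lerchZeta lam alp (1 - s) = cexp (-2 * π * I * lam * alp) * (Gammaℂ s / 2) *
      (cexp (π * s / 2 * I) * lerchZeta (-alp) lam s +
        cexp (2 * π * I * alp) * cexp (-(π * s / 2) * I) * lerchZeta alp (1 - lam) s) := by
  have h_cancel : cexp (2 * π * I * alp) * cexp (-2 * π * I * alp) = 1 := by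
    rw [← Complex.exp_add]
    ring_nf
    exact Complex.exp_zero
  rw [lerchZeta_one_sub_right, lerchZeta, bilateralLerch_zero_one_sub hlam halp hs,
    bilateralLerch_one_one_sub hlam halp hs, lerchZeta, exp_mul_I, exp_mul_I, Complex.cos_neg,
    Complex.sin_neg]
  set A := bilateralLerch 0 (-alp) lam s
  set B := bilateralLerch 1 (-alp) lam s
  linear_combination (-cexp (-2 * π * I * lam * alp) * (Gammaℂ s / 2) *
    (cos (π * s / 2) - sin (π * s / 2) * I) * ((A - B) / 2)) * h_cancel

theorem inv_Gammaℂ_mul_lerchZeta_one_sub (hlam : (lam : UnitAddCircle) ≠ 0)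
    (halp : (alp : UnitAddCircle) ≠ 0) (s : ℂ) :
    (Gammaℂ s)⁻¹ * lerchZeta lam alp (1 - s) = cexp (-2 * π * I * lam * alp) / 2 *
      (cexp (π * s / 2 * I) * lerchZeta (-alp) lam s +
        cexp (2 * π * I * alp) * cexp (-(π * s / 2) * I) * lerchZeta alp (1 - lam) s) := by
  have h_neg : ((-alp : ℝ) : UnitAddCircle) ≠ 0 := by
    rwa [AddCircle.coe_neg, neg_ne_zero]
  have h_one_sub : ((1 - lam : ℝ) : UnitAddCircle) ≠ 0 := by
    rwa [AddCircle.coe_sub, AddCircle.coe_period, zero_sub, neg_ne_zero]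
  have h_dense : Dense (range fun n : ℕ ↦ (-n : ℂ))ᶜ := (countable_range _).dense_compl ℂ
  have h_Gamma := differentiable_Gammaℂ_inv.continuous
  have h_left := (differentiable_lerchZeta hlam halp).continuous
  have h_right := (differentiable_lerchZeta h_neg hlam).continuous
  have h_right' := (differentiable_lerchZeta halp h_one_sub).continuous
  revert s
  refine congr_fun (Continuous.ext_on h_dense ?_ ?_ fun z hz ↦ ?_)
  · fun_prop
  · fun_prop
  have hz' (n : ℕ) : z ≠ -n := fun h ↦ hz ⟨n, h.symm⟩
  rw [lerchZeta_one_sub hlam halp hz', mul_div_assoc', div_mul_eq_mul_div]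
  field_simp [Gammaℂ_ne_zero hz']

end LerchZeta

lemma one_sub_conj_of_re_eq_one_half {s : ℂ} (hs : s.re = 1 / 2) : 1 - conj s = s := by
  refine Complex.ext ?_ (by simp)
  rw [sub_re, one_re, conj_re, hs]
  norm_num

theorem lerch_zero_on_critical_line_general {lam alp : ℝ} (hlam : lam ∈ Ioo 0 1)
    (halp : alp ∈ Ioo 0 1) {F G H : ℂ → ℂ} (hF : IsLerch lam alp F) (hG : IsLerch alp lam G)
    (hH : IsLerch (1 - alp) (1 - lam) H) {ρ : ℂ} (hρ : ρ ≠ 1) (hFρ : F (1 - conj ρ) = 0)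
    (hGρ : G ρ = 0) : H ρ = 0 := by
  have hlam' := coe_unitAddCircle_ne_zero hlam
  have halp' := coe_unitAddCircle_ne_zero halp
  have h_lam_alp : (Gammaℂ (conj ρ))⁻¹ * lerchZeta lam alp (1 - conj ρ) = 0 := by
    obtain rfl | hρ0 := eq_or_ne ρ 0
    · simp [Gammaℂ_def]
    · rw [← hF.eqOn (isLerch_lerchZeta hlam' halp) (by simpa using hρ0), hFρ, mul_zero]
  have h_alp_lam : lerchZeta (-alp) lam (conj ρ) = 0 := by
    rw [lerchZeta_neg_left_conj, ← hG.eqOn (isLerch_lerchZeta halp' hlam) hρ, hGρ, map_zero]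
  have h_dual : lerchZeta alp (1 - lam) (conj ρ) = 0 := by
    simpa [inv_Gammaℂ_mul_lerchZeta_one_sub hlam' halp', h_alp_lam] using h_lam_alp
  have halp_symm : 1 - alp ∈ Ioo 0 1 := by simpa [and_comm] using halp
  have hlam_symm : 1 - lam ∈ Ioo 0 1 := by simpa [and_comm] using hlam
  rw [hH.eqOn (isLerch_lerchZeta (coe_unitAddCircle_ne_zero halp_symm) hlam_symm) hρ,
    sub_eq_neg_add, lerchZeta_add_one_left, ← map_eq_zero (starRingEnd ℂ),
    ← lerchZeta_neg_left_conj, neg_neg, h_dual]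

/-- a zero of `L(lam, lam, ·)` on the critical line is a zero of
`L(1-lam, 1-lam, ·)`. -/
theorem lerch_zero_on_critical_line (lam : ℝ) (hlam0 : 0 < lam) (hlam1 : lam < 1)
    (F G : ℂ → ℂ) (hF : IsLerch lam lam F) (hG : IsLerch (1 - lam) (1 - lam) G)
    (ρ : ℂ) (hρ : F ρ = 0) (hρre : ρ.re = 1 / 2) :
    G ρ = 0 := by
  have h_ne_one : ρ ≠ 1 := by
    rintro rfl
    norm_num at hρre
  exact lerch_zero_on_critical_line_general ⟨hlam0, hlam1⟩ ⟨hlam0, hlam1⟩ hF hF hG h_ne_one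
    (by rwa [one_sub_conj_of_re_eq_one_half hρre]) hρ
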